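/- In the tower construction, for every n ≥ 2: Bₙ ∩ K_{n−1} = D_{n−1} ⊆ A_{n−1} = Aₙ ∩ K_{n−1}, and Dₙ ∩ K_{n−1} = D_{n−1}. -/

import Mathlib

/- Preamble: the tower construction of Fontana–Kabbaj (Example 3.1).
All rings are realized as subsets/subrings of one ambient field `Amb k0 r`:
the rational function field over `k0` in the indeterminates
`X₁, X₂, …` (indexed by `ℕ`), `Y`, and `Z₁, …, Z_{r-1}`. -/

noncomputable section

open Polynomial

/-- Index type for the indeterminates: `Sum.inl n` is `Xₙ`, `Sum.inr (Sum.inl ())` is `Y`,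
and `Sum.inr (Sum.inr i)` is `Z_{i+1}`. -/
abbrev TowerVars (r : ℕ) : Type := ℕ ⊕ (Unit ⊕ Fin (r - 1))

/-- The ambient field: the fraction field of the polynomial ring over `k0` in all the
indeterminates. -/
abbrev Amb (k0 : Type) [Field k0] (r : ℕ) : Type :=
  FractionRing (MvPolynomial (TowerVars r) k0)

variable (k0 : Type) [Field k0] (r : ℕ)

/-- The indeterminate `Xₙ` as an element of the ambient field. -/
def ambX (n : ℕ) : Amb k0 r :=
  algebraMap (MvPolynomial (TowerVars r) k0) (Amb k0 r) (MvPolynomial.X (Sum.inl n))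

/-- The indeterminate `Y` as an element of the ambient field. -/
def ambY : Amb k0 r :=
  algebraMap (MvPolynomial (TowerVars r) k0) (Amb k0 r) (MvPolynomial.X (Sum.inr (Sum.inl ())))

/-- The indeterminates `Z₁, …, Z_{r-1}` as elements of the ambient field. -/
def ambZ (i : Fin (r - 1)) : Amb k0 r :=
  algebraMap (MvPolynomial (TowerVars r) k0) (Amb k0 r) (MvPolynomial.X (Sum.inr (Sum.inr i)))

/-- The image of the base field `k0` in the ambient field. -/
def baseSet : Set (Amb k0 r) :=
  Set.range fun c : k0 => algebraMap (MvPolynomial (TowerVars r) k0) (Amb k0 r) (MvPolynomial.C c)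

/-- `kₙ := k0(X₁, …, Xₙ)` as a subfield of the ambient field. -/
def kfld (n : ℕ) : Subfield (Amb k0 r) :=
  Subfield.closure (baseSet k0 r ∪ {x | ∃ i, 1 ≤ i ∧ i ≤ n ∧ x = ambX k0 r i})

/-- `Fₙ := kₙ(Z₁, …, Z_{r-1})`. -/
def Ffld (n : ℕ) : Subfield (Amb k0 r) :=
  Subfield.closure (↑(kfld k0 r n) ∪ Set.range (ambZ k0 r))

/-- `Kₙ := Fₙ(Y)`. -/
def Kfld (n : ℕ) : Subfield (Amb k0 r) :=
  Subfield.closure (↑(Ffld k0 r n) ∪ {ambY k0 r})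

/-- The polynomial ring `Fₙ[Y]` as a subring of the ambient field. -/
def polyRing (n : ℕ) : Subring (Amb k0 r) :=
  Subring.closure (↑(Ffld k0 r n) ∪ {ambY k0 r})

/-- `Vₙ := Fₙ[Y]_{(Y)}`, the localization of `Fₙ[Y]` at the prime `(Y)`, as a subset of
the ambient field. -/
def Vset (n : ℕ) : Set (Amb k0 r) :=
  {x | ∃ f ∈ polyRing k0 r n, ∃ g ∈ polyRing k0 r n,
    (¬ ∃ h ∈ polyRing k0 r n, g = ambY k0 r * h) ∧ x = f / g}

/-- `Mₙ := Y·Fₙ[Y]_{(Y)}`, the maximal ideal of `Vₙ`. -/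
def Mset (n : ℕ) : Set (Amb k0 r) :=
  {x | ∃ v ∈ Vset k0 r n, x = ambY k0 r * v}

/-- `Aₙ := kₙ + Mₙ`. -/
def Aset (n : ℕ) : Set (Amb k0 r) :=
  {x | ∃ c ∈ kfld k0 r n, ∃ m ∈ Mset k0 r n, x = c + m}

/-- `k := ⋃ₙ kₙ` as a subset of the ambient field. -/
def kfldU : Set (Amb k0 r) := ⋃ n, (kfld k0 r n : Set (Amb k0 r))

/-- `F := k(Z₁, …, Z_{r-1}) = ⋃ₙ Fₙ`. -/
def FfldU : Subfield (Amb k0 r) :=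
  Subfield.closure (kfldU k0 r ∪ Set.range (ambZ k0 r))

/-- `K := F(Y) = ⋃ₙ Kₙ`. -/
def KfldU : Subfield (Amb k0 r) :=
  Subfield.closure (↑(FfldU k0 r) ∪ {ambY k0 r})

/-- The polynomial ring `F[Y]`. -/
def polyRingU : Subring (Amb k0 r) :=
  Subring.closure (↑(FfldU k0 r) ∪ {ambY k0 r})

/-- `V := F[Y]_{(Y)}`. -/
def VsetU : Set (Amb k0 r) :=
  {x | ∃ f ∈ polyRingU k0 r, ∃ g ∈ polyRingU k0 r,
    (¬ ∃ h ∈ polyRingU k0 r, g = ambY k0 r * h) ∧ x = f / g}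

/-- `M := Y·F[Y]_{(Y)} = ⋃ₙ Mₙ`. -/
def MsetU : Set (Amb k0 r) :=
  {x | ∃ v ∈ VsetU k0 r, x = ambY k0 r * v}

/-- `A := k + M = ⋃ₙ Aₙ`. -/
def AsetU : Set (Amb k0 r) :=
  {x | ∃ c ∈ kfldU k0 r, ∃ m ∈ MsetU k0 r, x = c + m}

/-- `X′ₙ := (1 + Y·Xₙ)/Y`. -/
def ambX' (n : ℕ) : Amb k0 r :=
  (1 + ambY k0 r * ambX k0 r n) / ambY k0 r

/-- `1` belongs to the ideal of `W` generated by the coefficients of `g`, where `W` is a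
subring (given as a subset `S`) of the ambient field. -/
def unitContent (S : Set (Amb k0 r)) (g : Polynomial (Amb k0 r)) : Prop :=
  ∃ (t : Finset ℕ) (u : ℕ → Amb k0 r), (∀ i ∈ t, u i ∈ S) ∧ ∑ i ∈ t, u i * g.coeff i = 1

/-- The Nagata ring `W(T)` of a subring `W ⊆ Amb k0 r` (given as a subset `S`) in the
"variable" `T`: all fractions `f(T)/g(T)` with `f, g ∈ W[T]` and the coefficients of `g`
generating the unit ideal of `W`.  (When `T` is transcendental over `W` this is the usual
Nagata ring.) -/
def nagataSet (S : Set (Amb k0 r)) (T : Amb k0 r) : Set (Amb k0 r) :=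
  {x | ∃ f g : Polynomial (Amb k0 r), (∀ i, f.coeff i ∈ S) ∧ (∀ i, g.coeff i ∈ S) ∧
    unitContent k0 r S g ∧ x = f.eval T / g.eval T}

/-- The valuation overrings of a ring `D` (given as a subset) inside a subfield `L` of the
ambient field: subrings `W` with `D ⊆ W ⊆ L` such that for every `x ∈ L`, `x ∈ W` or
`x⁻¹ ∈ W`. -/
def valOverringsIn (D : Set (Amb k0 r)) (L : Subfield (Amb k0 r)) : Set (Subring (Amb k0 r)) :=
  {W | D ⊆ ↑W ∧ (W : Set (Amb k0 r)) ⊆ (L : Set (Amb k0 r)) ∧ ∀ x ∈ L, x ∈ W ∨ x⁻¹ ∈ W}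

/-- The Kronecker function ring `Kr_{L(T)}(D, b) = ⋂ {W(T) : W a valuation overring of `D`
in `L`}`, realized as a subset of the ambient field. -/
def krSet (D : Set (Amb k0 r)) (L : Subfield (Amb k0 r)) (T : Amb k0 r) : Set (Amb k0 r) :=
  ⋂ W ∈ valOverringsIn k0 r D L, nagataSet k0 r (↑W) T

/-- The tower `Dₙ`: `D₁ := A₁` and `Dₙ := Bₙ ∩ Aₙ` for `n ≥ 2`, where
`Bₙ := Kr_{K_{n-1}(X′ₙ)}(D_{n-1}, b)`.  (The value at `0` is junk, set to `D₁`.) -/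
def Dset : ℕ → Set (Amb k0 r)
  | 0 => Aset k0 r 1
  | 1 => Aset k0 r 1
  | n + 2 => krSet k0 r (Dset (n + 1)) (Kfld k0 r (n + 1)) (ambX' k0 r (n + 2)) ∩ Aset k0 r (n + 2)

/-- `Bₙ := Kr_{K_{n-1}(X′ₙ)}(D_{n-1}, b)` (meaningful for `n ≥ 2`). -/
def Bset (n : ℕ) : Set (Amb k0 r) :=
  krSet k0 r (Dset k0 r (n - 1)) (Kfld k0 r (n - 1)) (ambX' k0 r n)

/-- `𝓜ₙ := Mₙ ∩ Dₙ`. -/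
def MMset (n : ℕ) : Set (Amb k0 r) := Mset k0 r n ∩ Dset k0 r n

/-- `D := ⋃__{n ≥ 1} Dₙ`. -/
def DsetU : Set (Amb k0 r) := ⋃ n, Dset k0 r n

/-- `𝓜 := ⋃_{n ≥ 2} 𝓜ₙ`. -/
def MMsetU : Set (Amb k0 r) := ⋃ n, MMset k0 r (n + 2)

/-- The localization `D_m = {a/b : a, b ∈ D, b ∉ m}` of a subring `D` of the ambient
field (given as a subset) at (the complement of) a subset `m`. -/
def locAt (D m : Set (Amb k0 r)) : Set (Amb k0 r) :=
  {x | ∃ a ∈ D, ∃ b ∈ D, b ∉ m ∧ x = a / b}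

/-- The quotient field, inside the ambient field, of a subring given as a subset. -/
def qfSet (D : Set (Amb k0 r)) : Set (Amb k0 r) :=
  {x | ∃ a ∈ D, ∃ b ∈ D, b ≠ 0 ∧ x = a / b}

/-- The nonunits of a subring of the ambient field, given as a subset: in a local
subring of a field these form the maximal ideal. -/
def nonunitsIn (S : Set (Amb k0 r)) : Set (Amb k0 r) :=
  {x | x ∈ S ∧ (x = 0 ∨ x⁻¹ ∉ S)}

/-- A subring `A` of the ambient field is a pseudo-valuation domain: it is local, and its
maximal ideal (= set of nonunits) is also the maximal ideal of some valuation overring of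
`A` in its quotient field. -/
def IsPVDSub (A : Subring (Amb k0 r)) : Prop :=
  IsLocalRing ↥A ∧
  ∃ W : Subring (Amb k0 r), (A : Set (Amb k0 r)) ⊆ ↑W ∧
    (W : Set (Amb k0 r)) ⊆ qfSet k0 r ↑A ∧
    (∀ x ∈ qfSet k0 r (A : Set (Amb k0 r)), x ∈ W ∨ x⁻¹ ∈ W) ∧
    nonunitsIn k0 r ↑A = nonunitsIn k0 r ↑W

/-- The valuative dimension of a subring of the ambient field: the supremum of the Krull
dimensions of its valuation overrings (in its quotient field). -/
def subValuativeDim (A : Subring (Amb k0 r)) : WithBot ℕ∞ :=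
  ⨆ W : {W : Subring (Amb k0 r) // (A : Set (Amb k0 r)) ⊆ ↑W ∧
      (W : Set (Amb k0 r)) ⊆ qfSet k0 r ↑A ∧
      ∀ x ∈ qfSet k0 r (A : Set (Amb k0 r)), x ∈ W ∨ x⁻¹ ∈ W},
    ringKrullDim ↥(W : Subring (Amb k0 r))


/-- `1` belongs to the ideal generated by the coefficients of a multivariable polynomial
`g` in the subring given by the subset `S`. -/
def mvUnitContent (S : Set (Amb k0 r)) (g : MvPolynomial ℕ (Amb k0 r)) : Prop :=
  ∃ (t : Finset (ℕ →₀ ℕ)) (u : (ℕ →₀ ℕ) → Amb k0 r),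
    (∀ m ∈ t, u m ∈ S) ∧ ∑ m ∈ t, u m * MvPolynomial.coeff m g = 1

/-- The Nagata ring `W(T₀, T₁, …)` of a subring `W` of the ambient field (given as a
subset `S`) in countably many "variables" `T j`: all fractions `f(T)/g(T)` with
`f, g ∈ W[T₀, T₁, …]` and the coefficients of `g` generating the unit ideal of `W`. -/
def nagataSetMv (S : Set (Amb k0 r)) (T : ℕ → Amb k0 r) : Set (Amb k0 r) :=
  {x | ∃ f g : MvPolynomial ℕ (Amb k0 r),
    (∀ m, MvPolynomial.coeff m f ∈ S) ∧ (∀ m, MvPolynomial.coeff m g ∈ S) ∧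
    mvUnitContent k0 r S g ∧ x = MvPolynomial.eval T f / MvPolynomial.eval T g}

/-- A subring `S` of the ambient field is an *essential* domain: `S` is the intersection
of a family of localizations `S_p` at primes `p ∈ Δ`, each of which is a valuation domain
(with quotient field the quotient field of `S`). -/
def IsEssentialSub (S : Subring (Amb k0 r)) : Prop :=
  ∃ Δ : Set (Ideal ↥S),
    (∀ p ∈ Δ, p.IsPrime) ∧
    (∀ p ∈ Δ, ∀ x ∈ qfSet k0 r (S : Set (Amb k0 r)),
      x ∈ locAt k0 r ↑S (Subtype.val '' (p : Set ↥S)) ∨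
      x⁻¹ ∈ locAt k0 r ↑S (Subtype.val '' (p : Set ↥S))) ∧
    (S : Set (Amb k0 r)) = ⋂ p ∈ Δ, locAt k0 r ↑S (Subtype.val '' (p : Set ↥S))

end

section Generic

open Polynomial

variable {A : Type} [Field A]

/-- `T` is transcendental over the subset `E`, in terms of coefficients. -/
def TrOver (E : Set A) (T : A) : Prop :=
  ∀ p : A[X], (∀ i, p.coeff i ∈ E) → p.eval T = 0 → p = 0

theorem TrOver.mono {E E' : Set A} {T : A} (h : E ⊆ E') (ht : TrOver E' T) : TrOver E T :=
  fun p hp h0 => ht p (fun i => h (hp i)) h0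

theorem coeff_lift (S : Subring A) (f : A[X]) (hf : ∀ i, f.coeff i ∈ S) :
    ∃ q : (↥S)[X], q.map S.subtype = f := by
  have := (lifts_iff_coeff_lifts (f := S.subtype) f).2 (fun n => ⟨⟨_, hf n⟩, rfl⟩)
  exact (mem_lifts f).1 this

theorem coeff_map_mem (S : Subring A) (q : (↥S)[X]) (i : ℕ) : (q.map S.subtype).coeff i ∈ S := by
  rw [coeff_map]; exact (q.coeff i).2

theorem coeff_mul_mem (S : Subring A) {f g : A[X]} (hf : ∀ i, f.coeff i ∈ S)
    (hg : ∀ i, g.coeff i ∈ S) (i : ℕ) : (f * g).coeff i ∈ S := by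
  rw [coeff_mul]
  exact S.sum_mem fun j _ => S.mul_mem (hf _) (hg _)

theorem coeff_add_mem (S : Subring A) {f g : A[X]} (hf : ∀ i, f.coeff i ∈ S)
    (hg : ∀ i, g.coeff i ∈ S) (i : ℕ) : (f + g).coeff i ∈ S := by
  rw [coeff_add]
  exact S.add_mem (hf _) (hg _)

theorem coeff_neg_mem (S : Subring A) {f : A[X]} (hf : ∀ i, f.coeff i ∈ S)
    (i : ℕ) : (-f).coeff i ∈ S := by
  rw [coeff_neg]
  exact S.neg_mem (hf _)

theorem coeff_C_mem (S : Subring A) {x : A} (hx : x ∈ S) (i : ℕ) : (C x).coeff i ∈ S := by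
  rw [coeff_C]; split_ifs
  · exact hx
  · exact S.zero_mem

theorem coeff_X_mem (S : Subring A) (i : ℕ) : (X : A[X]).coeff i ∈ S := by
  rw [coeff_X]; split_ifs
  · exact S.one_mem
  · exact S.zero_mem

theorem eval_mem (S : Subring A) {f : A[X]} (hf : ∀ i, f.coeff i ∈ S) {x : A} (hx : x ∈ S) :
    f.eval x ∈ S := by
  rw [eval_eq_sum]
  exact S.sum_mem fun j _ => S.mul_mem (hf _) (S.pow_mem hx _)

/-- Elements of `E[T]` are values of polynomials. -/
theorem mem_ringClosure_iff (E : Subfield A) (T y : A) :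
    y ∈ Subring.closure ((E : Set A) ∪ {T}) ↔ ∃ f : A[X], (∀ i, f.coeff i ∈ E) ∧ y = f.eval T := by
  constructor
  · intro h
    induction h using Subring.closure_induction with
    | mem x hx =>
      rcases hx with hx | hx
      · exact ⟨C x, coeff_C_mem E.toSubring hx, by simp⟩
      · exact ⟨X, coeff_X_mem E.toSubring, by simpa using hx⟩
    | zero => exact ⟨0, by simp, by simp⟩
    | one => exact ⟨C 1, coeff_C_mem E.toSubring E.one_mem, by simp⟩
    | add x y _ _ hx hy =>
      obtain ⟨f, hf, rfl⟩ := hx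
      obtain ⟨g, hg, rfl⟩ := hy
      exact ⟨f + g, coeff_add_mem E.toSubring hf hg, by simp⟩
    | mul x y _ _ hx hy =>
      obtain ⟨f, hf, rfl⟩ := hx
      obtain ⟨g, hg, rfl⟩ := hy
      exact ⟨f * g, coeff_mul_mem E.toSubring hf hg, by simp⟩
    | neg x _ hx =>
      obtain ⟨f, hf, rfl⟩ := hx
      exact ⟨-f, coeff_neg_mem E.toSubring hf, by simp⟩
  · rintro ⟨f, hf, rfl⟩
    exact eval_mem (Subring.closure ((E : Set A) ∪ {T})) (fun i => Subring.subset_closure (Or.inl (hf i)))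
      (Subring.subset_closure (Or.inr rfl))

theorem mem_fieldClosure (E : Subfield A) (T x : A)
    (hx : x ∈ Subfield.closure ((E : Set A) ∪ {T})) :
    ∃ f g : A[X], (∀ i, f.coeff i ∈ E) ∧ (∀ i, g.coeff i ∈ E) ∧ g.eval T ≠ 0 ∧
      x = f.eval T / g.eval T := by
  obtain ⟨y, hy, z, hz, rfl⟩ := Subfield.mem_closure_iff.1 hx
  obtain ⟨f, hf, rfl⟩ := (mem_ringClosure_iff E T y).1 hy
  obtain ⟨g, hg, rfl⟩ := (mem_ringClosure_iff E T z).1 hz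
  by_cases h : g.eval T = 0
  · exact ⟨0, C 1, by simp, coeff_C_mem E.toSubring E.one_mem, by simp, by simp [h]⟩
  · exact ⟨f, g, hf, hg, h, rfl⟩

/-- `E(T) ∩ E' = E` if `T` is transcendental over `E' ⊇ E`. -/
theorem mem_of_TrOver (E E' : Subfield A) (h : E ≤ E') (T x : A) (ht : TrOver (E' : Set A) T)
    (hx : x ∈ Subfield.closure ((E : Set A) ∪ {T})) (hx' : x ∈ E') : x ∈ E := by
  obtain ⟨f, g, hf, hg, h0, e⟩ := mem_fieldClosure E T x hx
  have h1 : C x * g + -f = 0 := by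
    apply ht
    · exact coeff_add_mem E'.toSubring (coeff_mul_mem E'.toSubring (coeff_C_mem E'.toSubring hx')
        (fun i => h (hg i))) (coeff_neg_mem E'.toSubring (fun i => h (hf i)))
    · rw [e]; simp [h0]
  have hg0 : g ≠ 0 := by rintro rfl; simp at h0
  have hi : g.coeff g.natDegree ≠ 0 := by simpa using hg0
  have h2 := congrArg (fun p => p.coeff g.natDegree) h1
  simp only [coeff_add, coeff_C_mul, coeff_neg, coeff_zero] at h2
  have : x = f.coeff g.natDegree / g.coeff g.natDegree := by
    rw [eq_div_iff hi]; linear_combination h2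
  rw [this]
  exact E.div_mem (hf _) (hg _)

theorem TrOver_of_transcendental (E : Subfield A) (T : A) (h : Transcendental E T) :
    TrOver (E : Set A) T := by
  intro p hp h0
  obtain ⟨q, rfl⟩ := coeff_lift E.toSubring p hp
  have : q = 0 := by
    by_contra hq
    refine h ⟨q, hq, ?_⟩
    rw [aeval_def, eval₂_eq_eval_map]
    exact h0
  simp [this]

theorem transcendental_of_TrOver (E : Subfield A) (T : A) (h : TrOver (E : Set A) T) :
    Transcendental E T := by
  rintro ⟨q, hq, h0⟩
  rw [aeval_def, eval₂_eq_eval_map] at h0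
  have := h _ (coeff_map_mem E.toSubring q) h0
  exact hq ((Polynomial.map_eq_zero_iff Subtype.val_injective).1 this)

theorem mem_of_algebraic (E : Subfield A) (T x : A) (ht : TrOver (E : Set A) T)
    (hx : x ∈ Subfield.closure ((E : Set A) ∪ {T})) (ha : IsAlgebraic E x) : x ∈ E := by
  let E' := IntermediateField.adjoin E {x}
  refine mem_of_TrOver E E'.toSubfield ?_ T x ?_ hx ?_
  · intro y hy
    exact E'.algebraMap_mem ⟨y, hy⟩
  · have : Algebra.IsAlgebraic E E' :=
      IntermediateField.isAlgebraic_adjoin_simple ha.isIntegral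
    have h2 : Transcendental E' T := by
      intro h3
      exact transcendental_of_TrOver E T ht (h3.restrictScalars E)
    exact TrOver_of_transcendental E'.toSubfield T h2
  · exact IntermediateField.mem_adjoin_simple_self E x

theorem isIntegral_subring_mono {R S : Subring A} (h : R ≤ S) {x : A} (hx : IsIntegral R x) :
    IsIntegral S x := by
  let : Algebra R S := (Subring.inclusion h).toAlgebra
  have : IsScalarTower R S A := .of_algebraMap_eq fun _ ↦ rfl
  exact hx.tower_top

theorem mem_of_isIntegral_of_inv (S : Subring A) (x : A) (hx : IsIntegral S x) (hi : x⁻¹ ∈ S) :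
    x ∈ S := by
  by_cases hx0 : x = 0
  · rw [hx0]; exact S.zero_mem
  obtain ⟨p, hp, h0⟩ := hx
  have : Invertible x := invertibleOfNonzero hx0
  have h1 := eval₂_reverse_mul_pow (algebraMap S A) x p
  rw [h0, invOf_eq_inv, mul_eq_zero, or_iff_left (pow_ne_zero _ hx0), ← p.reverse.divX_mul_X_add,
    eval₂_add, eval₂_mul, eval₂_X, eval₂_C, coeff_zero_reverse, hp.leadingCoeff, map_one] at h1
  have h2 : x = - eval₂ (algebraMap S A) x⁻¹ p.reverse.divX := by
    generalize eval₂ (algebraMap S A) x⁻¹ p.reverse.divX = z at h1 ⊢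
    field_simp at h1
    linear_combination h1
  rw [h2, eval₂_eq_eval_map]
  exact S.neg_mem (eval_mem S (coeff_map_mem S _) hi)

/-- An element of a nonzero finite family in a valued field with maximal value. -/
theorem exists_max (L : Subfield A) (W : Subring A) (hv : ∀ x ∈ L, x ∈ W ∨ x⁻¹ ∈ W)
    (s : Finset A) (hs : ∀ a ∈ s, a ∈ L) (hn : ∃ a ∈ s, a ≠ 0) :
    ∃ a ∈ s, a ≠ 0 ∧ ∀ b ∈ s, b / a ∈ W := by
  classical
  induction s using Finset.induction_on with
  | empty => simp at hn
  | insert c s hc ih =>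
    by_cases h : ∃ a ∈ s, a ≠ 0
    · obtain ⟨a, ha, ha0, hb⟩ := ih (fun a ha => hs a (Finset.mem_insert_of_mem ha)) h
      have haL := hs a (Finset.mem_insert_of_mem ha)
      have hcL := hs c (Finset.mem_insert_self _ _)
      by_cases hca : c / a ∈ W
      · refine ⟨a, Finset.mem_insert_of_mem ha, ha0, fun b hb' => ?_⟩
        rcases Finset.mem_insert.1 hb' with rfl | h'
        · exact hca
        · exact hb b h'
      · have h3 : (c / a)⁻¹ ∈ W := (hv _ (L.div_mem hcL haL)).resolve_left hca
        have hc0 : c ≠ 0 := by rintro rfl; exact hca (by simp [W.zero_mem])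
        refine ⟨c, Finset.mem_insert_self _ _, hc0, fun b hb' => ?_⟩
        rcases Finset.mem_insert.1 hb' with rfl | h'
        · rw [div_self hc0]; exact W.one_mem
        · have : b / c = b / a * (c / a)⁻¹ := by field_simp
          rw [this]; exact W.mul_mem (hb b h') h3
    · push Not at h
      obtain ⟨a, ha, ha0⟩ := hn
      rcases Finset.mem_insert.1 ha with rfl | h'
      · refine ⟨a, ha, ha0, fun b hb' => ?_⟩
        rcases Finset.mem_insert.1 hb' with rfl | h'
        · rw [div_self ha0]; exact W.one_mem
        · rw [h b h']; simp [W.zero_mem]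
      · exact absurd (h a h') ha0

theorem isAlgebraic_subfield_mono {E E' : Subfield A} (h : E ≤ E') {x : A} (hx : IsAlgebraic E x) :
    IsAlgebraic E' x := by
  let : Algebra E E' := (Subfield.inclusion h).toAlgebra
  have : IsScalarTower E E' A := .of_algebraMap_eq fun _ ↦ rfl
  exact hx.tower_top _

end Generic

noncomputable section Places

open Polynomial

variable (k0 : Type) [Field k0] (r : ℕ)

/-- The inclusion of polynomials into Laurent series. -/
def jmap (A : Type) [Field A] : A[X] →+* LaurentSeries A :=
  (HahnSeries.ofPowerSeries ℤ A).comp Polynomial.coeToPowerSeries.ringHom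

theorem jmap_apply (A : Type) [Field A] (p : A[X]) :
    jmap A p = HahnSeries.ofPowerSeries ℤ A (p : PowerSeries A) := rfl

theorem jmap_C (A : Type) [Field A] (a : A) : jmap A (C a) = HahnSeries.C a := by
  rw [jmap_apply, Polynomial.coe_C, HahnSeries.ofPowerSeries_C]

theorem jmap_injective (A : Type) [Field A] : Function.Injective (jmap A) := by
  intro p q h
  exact Polynomial.coe_injective A (HahnSeries.ofPowerSeries_injective h)

/-- The variable `v`. -/
def ambVar (v : TowerVars r) : Amb k0 r :=
  algebraMap (MvPolynomial (TowerVars r) k0) (Amb k0 r) (MvPolynomial.X v)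

/-- Expansion of polynomials with respect to the variable `v`. -/
def psi0 (v : TowerVars r) : MvPolynomial (TowerVars r) k0 →+* (Amb k0 r)[X] :=
  open Classical in
  MvPolynomial.eval₂Hom
    ((C : Amb k0 r →+* (Amb k0 r)[X]).comp
      ((algebraMap (MvPolynomial (TowerVars r) k0) (Amb k0 r)).comp MvPolynomial.C))
    (fun w => if w = v then X else C (ambVar k0 r w))

theorem psi0_injective (v : TowerVars r) : Function.Injective (psi0 k0 r v) := by
  have h : (Polynomial.evalRingHom (ambVar k0 r v)).comp (psi0 k0 r v) =
      algebraMap (MvPolynomial (TowerVars r) k0) (Amb k0 r) := by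
    apply MvPolynomial.ringHom_ext
    · intro c; simp [psi0]
    · intro w
      by_cases hw : w = v
      · subst hw; simp [psi0, ambVar]
      · simp [psi0, hw, ambVar]
  intro a b hab
  apply IsFractionRing.injective (MvPolynomial (TowerVars r) k0) (Amb k0 r)
  rw [← h]
  simp [hab]

/-- Laurent expansion with respect to the variable `v`. -/
def psi (v : TowerVars r) : Amb k0 r →+* LaurentSeries (Amb k0 r) :=
  IsFractionRing.lift (A := MvPolynomial (TowerVars r) k0) (g := (jmap (Amb k0 r)).comp (psi0 k0 r v))
    ((jmap_injective _).comp (psi0_injective k0 r v))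

theorem psi_var_self (v : TowerVars r) : psi k0 r v (ambVar k0 r v) = jmap _ X := by
  rw [psi, ambVar, IsFractionRing.lift_algebraMap]
  simp [psi0]

theorem psi_var_ne (v w : TowerVars r) (h : w ≠ v) :
    psi k0 r v (ambVar k0 r w) = HahnSeries.C (ambVar k0 r w) := by
  rw [← jmap_C, psi]
  conv_lhs => rw [ambVar, IsFractionRing.lift_algebraMap]
  simp [psi0, h]

theorem psi_base (v : TowerVars r) (x : Amb k0 r) (h : x ∈ baseSet k0 r) :
    psi k0 r v x = HahnSeries.C x := by
  obtain ⟨c, rfl⟩ := h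
  rw [← jmap_C, psi]
  dsimp only
  rw [IsFractionRing.lift_algebraMap]
  simp [psi0]

/-- The subfield of elements independent of the variable `v`. -/
def constFld (v : TowerVars r) : Subfield (Amb k0 r) :=
  (psi k0 r v).eqLocusField HahnSeries.C

theorem mem_constFld {v : TowerVars r} {x : Amb k0 r} :
    x ∈ constFld k0 r v ↔ psi k0 r v x = HahnSeries.C x := Iff.rfl

theorem psi_eval (v : TowerVars r) (p : (Amb k0 r)[X]) (hp : ∀ i, p.coeff i ∈ constFld k0 r v) :
    psi k0 r v (p.eval (ambVar k0 r v)) = jmap _ p := by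
  conv_rhs => rw [p.as_sum_support_C_mul_X_pow]
  rw [eval_eq_sum, Polynomial.sum, map_sum, map_sum]
  refine Finset.sum_congr rfl fun i _ => ?_
  rw [map_mul, map_pow, map_mul, map_pow, psi_var_self, jmap_C, (mem_constFld k0 r).1 (hp i)]

theorem TrOver_constFld (v : TowerVars r) :
    TrOver (constFld k0 r v : Set (Amb k0 r)) (ambVar k0 r v) := by
  intro p hp h0
  have := psi_eval k0 r v p hp
  rw [h0, map_zero, ← map_zero (jmap _)] at this
  exact (jmap_injective _ this).symm

abbrev vX (n : ℕ) : TowerVars r := Sum.inl n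
abbrev vY : TowerVars r := Sum.inr (Sum.inl ())
abbrev vZ (i : Fin (r - 1)) : TowerVars r := Sum.inr (Sum.inr i)

theorem kfld_le_const (n : ℕ) (v : TowerVars r) (hv : ∀ i, 1 ≤ i → i ≤ n → v ≠ vX r i) :
    kfld k0 r n ≤ constFld k0 r v := by
  refine Subfield.closure_le.2 ?_
  rintro x (hx | ⟨i, h1, h2, rfl⟩)
  · exact psi_base k0 r v x hx
  · exact psi_var_ne k0 r v (vX r i) (hv i h1 h2).symm

theorem Ffld_le_const (n : ℕ) (v : TowerVars r) (hv : ∀ i, 1 ≤ i → i ≤ n → v ≠ vX r i)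
    (hz : ∀ i, v ≠ vZ r i) : Ffld k0 r n ≤ constFld k0 r v := by
  refine Subfield.closure_le.2 ?_
  rintro x (hx | ⟨i, rfl⟩)
  · exact kfld_le_const k0 r n v hv hx
  · exact psi_var_ne k0 r v (vZ r i) (hz i).symm

theorem Kfld_le_const (n : ℕ) (v : TowerVars r) (hv : ∀ i, 1 ≤ i → i ≤ n → v ≠ vX r i)
    (hz : ∀ i, v ≠ vZ r i) (hy : v ≠ vY r) : Kfld k0 r n ≤ constFld k0 r v := by
  refine Subfield.closure_le.2 ?_
  rintro x (hx | rfl)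
  · exact Ffld_le_const k0 r n v hv hz hx
  · exact psi_var_ne k0 r v (vY r) hy.symm

theorem kfld_le_Ffld (n : ℕ) : kfld k0 r n ≤ Ffld k0 r n :=
  fun _ hx => Subfield.subset_closure (Or.inl hx)

theorem Ffld_le_Kfld (n : ℕ) : Ffld k0 r n ≤ Kfld k0 r n :=
  fun _ hx => Subfield.subset_closure (Or.inl hx)

theorem ambY_mem (n : ℕ) : ambY k0 r ∈ Kfld k0 r n := Subfield.subset_closure (Or.inr rfl)

theorem ambZ_mem (n : ℕ) (i) : ambZ k0 r i ∈ Ffld k0 r n := Subfield.subset_closure (Or.inr ⟨i, rfl⟩)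

theorem ambY_ne : ambY k0 r ≠ 0 := by
  intro h
  have := (map_eq_zero_iff _ (IsFractionRing.injective (MvPolynomial (TowerVars r) k0) (Amb k0 r))).1 h
  exact MvPolynomial.X_ne_zero _ this

theorem kfld_mono {m n : ℕ} (h : m ≤ n) : kfld k0 r m ≤ kfld k0 r n := by
  refine Subfield.closure_mono ?_
  rintro x (hx | ⟨i, h1, h2, rfl⟩)
  · exact Or.inl hx
  · exact Or.inr ⟨i, h1, h2.trans h, rfl⟩

theorem Ffld_mono {m n : ℕ} (h : m ≤ n) : Ffld k0 r m ≤ Ffld k0 r n :=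
  Subfield.closure_mono (Set.union_subset_union_left _ (kfld_mono k0 r h))

theorem Kfld_mono {m n : ℕ} (h : m ≤ n) : Kfld k0 r m ≤ Kfld k0 r n :=
  Subfield.closure_mono (Set.union_subset_union_left _ (Ffld_mono k0 r h))

theorem kfld_succ (n : ℕ) :
    kfld k0 r (n + 1) ≤ Subfield.closure ((kfld k0 r n : Set (Amb k0 r)) ∪ {ambX k0 r (n + 1)}) := by
  refine Subfield.closure_le.2 ?_
  rintro x (hx | ⟨i, h1, h2, rfl⟩)
  · exact Subfield.subset_closure (Or.inl (Subfield.subset_closure (Or.inl hx)))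
  · rcases Nat.le_succ_iff.1 h2 with h | rfl
    · exact Subfield.subset_closure (Or.inl (Subfield.subset_closure (Or.inr ⟨i, h1, h, rfl⟩)))
    · exact Subfield.subset_closure (Or.inr rfl)

theorem Kfld_succ (n : ℕ) :
    Kfld k0 r (n + 1) ≤
      Subfield.closure ((Kfld k0 r n : Set (Amb k0 r)) ∪ {ambX' k0 r (n + 1)}) := by
  set G := Subfield.closure ((Kfld k0 r n : Set (Amb k0 r)) ∪ {ambX' k0 r (n + 1)}) with hG
  have hK : Kfld k0 r n ≤ G := fun x hx => Subfield.subset_closure (Or.inl hx)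
  have hT : ambX' k0 r (n + 1) ∈ G := Subfield.subset_closure (Or.inr rfl)
  have hY : ambY k0 r ∈ G := hK (ambY_mem k0 r n)
  have hX : ambX k0 r (n + 1) ∈ G := by
    have : ambX k0 r (n + 1) = ambX' k0 r (n + 1) - (ambY k0 r)⁻¹ := by
      have := ambY_ne k0 r
      rw [ambX']; field_simp; ring
    rw [this]
    exact G.sub_mem hT (G.inv_mem hY)
  refine Subfield.closure_le.2 ?_
  rintro x (hx | rfl)
  · refine (Subfield.closure_le.2 ?_ : Ffld k0 r (n + 1) ≤ G) hx
    rintro x (hx | ⟨i, rfl⟩)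
    · refine (Subfield.closure_le.2 ?_ :
        Subfield.closure ((kfld k0 r n : Set (Amb k0 r)) ∪ {ambX k0 r (n + 1)}) ≤ G)
        (kfld_succ k0 r n hx)
      rintro x (hx | rfl)
      · exact hK (Ffld_le_Kfld k0 r n (kfld_le_Ffld k0 r n hx))
      · exact hX
    · exact hK (Ffld_le_Kfld k0 r n (ambZ_mem k0 r n i))
  · exact hY

theorem TrOver_X (n : ℕ) : TrOver (Kfld k0 r n : Set (Amb k0 r)) (ambX k0 r (n + 1)) := by
  refine (TrOver_constFld k0 r (vX r (n + 1))).mono ?_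
  refine Kfld_le_const k0 r n _ ?_ ?_ ?_
  · intro i _ h2 h
    have := Sum.inl_injective h
    omega
  · intro i; exact Sum.inl_ne_inr
  · exact Sum.inl_ne_inr

theorem TrOver_X' (n : ℕ) : TrOver (Kfld k0 r n : Set (Amb k0 r)) (ambX' k0 r (n + 1)) := by
  intro p hp h0
  have hX : ambX' k0 r (n + 1) = ambX k0 r (n + 1) + (ambY k0 r)⁻¹ := by
    have := ambY_ne k0 r
    rw [ambX']; field_simp; ring
  have h1 : p.comp (X + C (ambY k0 r)⁻¹) = 0 := by
    apply TrOver_X k0 r n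
    · obtain ⟨q, rfl⟩ := coeff_lift (Kfld k0 r n).toSubring p hp
      intro i
      have : X + C (ambY k0 r)⁻¹ =
          (X + C (⟨(ambY k0 r)⁻¹, (Kfld k0 r n).inv_mem (ambY_mem k0 r n)⟩ :
            (Kfld k0 r n).toSubring)).map (Kfld k0 r n).toSubring.subtype := by
        simp
      rw [this, ← Polynomial.map_comp]
      exact coeff_map_mem (Kfld k0 r n).toSubring _ i
    · rw [eval_comp]; simpa [← hX] using h0
  have h2 := congrArg (fun q => q.comp (X - C (ambY k0 r)⁻¹)) h1
  simpa [comp_assoc] using h2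

theorem TrOver_Y (n : ℕ) : TrOver (Ffld k0 r n : Set (Amb k0 r)) (ambY k0 r) := by
  refine (TrOver_constFld k0 r (vY r)).mono ?_
  refine Ffld_le_const k0 r n _ ?_ ?_
  · intro i _ _; exact Sum.inr_ne_inl
  · intro i h; simp at h

/-- `kₙ(Z₁,…,Z_j)`. -/
def Gfld (n j : ℕ) : Subfield (Amb k0 r) :=
  Subfield.closure ((kfld k0 r n : Set (Amb k0 r)) ∪ {x | ∃ i : Fin (r - 1), i.1 < j ∧ x = ambZ k0 r i})

theorem kfld_le_Gfld (n j : ℕ) : kfld k0 r n ≤ Gfld k0 r n j :=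
  fun _ hx => Subfield.subset_closure (Or.inl hx)

theorem mem_kfld_of_algebraic (n j : ℕ) (x : Amb k0 r) (hx : x ∈ Gfld k0 r n j)
    (ha : IsAlgebraic (kfld k0 r n) x) : x ∈ kfld k0 r n := by
  induction j with
  | zero =>
    refine (Subfield.closure_le.2 ?_ : Gfld k0 r n 0 ≤ kfld k0 r n) hx
    rintro x (hx | ⟨i, h, _⟩)
    · exact hx
    · omega
  | succ j ih =>
    by_cases hj : j < r - 1
    · apply ih
      refine mem_of_algebraic (Gfld k0 r n j) (ambZ k0 r ⟨j, hj⟩) x ?_ ?_ ?_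
      · refine (TrOver_constFld k0 r (vZ r ⟨j, hj⟩)).mono ?_
        refine Subfield.closure_le.2 ?_
        rintro x (hx | ⟨i, h, rfl⟩)
        · exact kfld_le_const k0 r n _ (fun i _ _ => Sum.inr_ne_inl) hx
        · refine psi_var_ne k0 r _ (vZ r i) ?_
          intro h'
          have := Sum.inr_injective (Sum.inr_injective h')
          subst this
          simp at h
      · refine (Subfield.closure_le.2 ?_ : Gfld k0 r n (j + 1) ≤ _) hx
        rintro x (hx | ⟨i, h, rfl⟩)
        · exact Subfield.subset_closure (Or.inl (kfld_le_Gfld k0 r n j hx))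
        · by_cases h' : i.1 < j
          · exact Subfield.subset_closure (Or.inl (Subfield.subset_closure (Or.inr ⟨i, h', rfl⟩)))
          · have : i = ⟨j, hj⟩ := Fin.ext (by simp; omega)
            subst this
            exact Subfield.subset_closure (Or.inr rfl)
      · exact isAlgebraic_subfield_mono (kfld_le_Gfld k0 r n j) ha
    · apply ih
      refine (Subfield.closure_mono ?_ : Gfld k0 r n (j + 1) ≤ Gfld k0 r n j) hx
      rintro x (hx | ⟨i, h, rfl⟩)
      · exact Or.inl hx
      · exact Or.inr ⟨i, by omega, rfl⟩

theorem kfld_algClosed (n : ℕ) (x : Amb k0 r) (hx : x ∈ Ffld k0 r n)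
    (ha : IsAlgebraic (kfld k0 r n) x) : x ∈ kfld k0 r n := by
  refine mem_kfld_of_algebraic k0 r n (r - 1) x ?_ ha
  refine (Subfield.closure_mono ?_ : Ffld k0 r n ≤ _) hx
  rintro x (hx | ⟨i, rfl⟩)
  · exact Or.inl hx
  · exact Or.inr ⟨i, i.2, rfl⟩

theorem kfld_inter (n : ℕ) (x : Amb k0 r) (hx : x ∈ Ffld k0 r n) (hx' : x ∈ kfld k0 r (n + 1)) :
    x ∈ kfld k0 r n :=
  mem_of_TrOver _ _ (kfld_le_Ffld k0 r n) (ambX k0 r (n + 1)) x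
    ((TrOver_X k0 r n).mono (Ffld_le_Kfld k0 r n)) (kfld_succ k0 r n hx') hx

end Places

noncomputable section PartA

open Polynomial

variable (k0 : Type) [Field k0] (r : ℕ)

theorem Ffld_le_constY (n : ℕ) : Ffld k0 r n ≤ constFld k0 r (vY r) := by
  refine Ffld_le_const k0 r n _ ?_ ?_
  · intro i _ _; exact Sum.inr_ne_inl
  · intro i h; simp at h

theorem psiY_eval (n : ℕ) (p : (Amb k0 r)[X]) (hp : ∀ i, p.coeff i ∈ Ffld k0 r n) :
    psi k0 r (vY r) (p.eval (ambY k0 r)) =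
      HahnSeries.ofPowerSeries ℤ (Amb k0 r) (p : PowerSeries (Amb k0 r)) :=
  psi_eval k0 r (vY r) p (fun i => Ffld_le_constY k0 r n (hp i))

/-- If `f/g` expands to the power series `p`, then `f = p g`. -/
theorem series_eq (n : ℕ) (f g : (Amb k0 r)[X]) (hf : ∀ i, f.coeff i ∈ Ffld k0 r n)
    (hg : ∀ i, g.coeff i ∈ Ffld k0 r n) (h0 : g.eval (ambY k0 r) ≠ 0) (p : PowerSeries (Amb k0 r))
    (hp : psi k0 r (vY r) (f.eval (ambY k0 r) / g.eval (ambY k0 r)) = HahnSeries.ofPowerSeries ℤ _ p) :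
    (f : PowerSeries (Amb k0 r)) = p * (g : PowerSeries (Amb k0 r)) := by
  apply HahnSeries.ofPowerSeries_injective (Γ := ℤ)
  rw [map_mul, ← hp, ← psiY_eval k0 r n f hf, ← psiY_eval k0 r n g hg, ← map_mul, div_mul_cancel₀ _ h0]

theorem coeff_divX_mem {A : Type} [Field A] (E : Subfield A) {f : A[X]} (hf : ∀ i, f.coeff i ∈ E)
    (i : ℕ) : f.divX.coeff i ∈ E := by
  rw [coeff_divX]; exact hf _

theorem eval_of_coeff_zero {A : Type} [Field A] {f : A[X]} (h : f.coeff 0 = 0) (y : A) :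
    f.eval y = y * f.divX.eval y := by
  conv_lhs => rw [← f.divX_mul_X_add, h]
  simp [mul_comm]

theorem good_fraction (n : ℕ) (m : ℕ) : ∀ (f g : (Amb k0 r)[X]), g.natDegree = m →
    (∀ i, f.coeff i ∈ Ffld k0 r n) →
    (∀ i, g.coeff i ∈ Ffld k0 r n) → g.eval (ambY k0 r) ≠ 0 → ∀ (p : PowerSeries (Amb k0 r)),
    psi k0 r (vY r) (f.eval (ambY k0 r) / g.eval (ambY k0 r)) = HahnSeries.ofPowerSeries ℤ _ p →
    ∃ f' g' : (Amb k0 r)[X], (∀ i, f'.coeff i ∈ Ffld k0 r n) ∧ (∀ i, g'.coeff i ∈ Ffld k0 r n) ∧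
      g'.eval (ambY k0 r) ≠ 0 ∧ g'.coeff 0 ≠ 0 ∧
      f.eval (ambY k0 r) / g.eval (ambY k0 r) = f'.eval (ambY k0 r) / g'.eval (ambY k0 r) := by
  induction m with
  | zero =>
    intro f g hm hf hg h0 p hp
    refine ⟨f, g, hf, hg, h0, ?_, rfl⟩
    intro h
    rw [eq_C_of_natDegree_eq_zero hm, h] at h0
    simp at h0
  | succ m ih =>
    intro f g hm hf hg h0 p hp
    by_cases hg0 : g.coeff 0 = 0
    · have e := series_eq k0 r n f g hf hg h0 p hp
      have hf0 : f.coeff 0 = 0 := by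
        have := congrArg (PowerSeries.constantCoeff) e
        simpa [hg0] using this
      have hY := ambY_ne k0 r
      have eg := eval_of_coeff_zero hg0 (ambY k0 r)
      have ef := eval_of_coeff_zero hf0 (ambY k0 r)
      have e1 : f.eval (ambY k0 r) / g.eval (ambY k0 r) =
          f.divX.eval (ambY k0 r) / g.divX.eval (ambY k0 r) := by
        rw [eg, ef, mul_div_mul_left _ _ hY]
      rw [e1] at hp ⊢
      refine ih f.divX g.divX ?_ (coeff_divX_mem _ hf) (coeff_divX_mem _ hg) ?_ p hp
      · rw [natDegree_divX_eq_natDegree_tsub_one, hm]; rfl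
      · rw [eg] at h0; exact right_ne_zero_of_mul h0
    · exact ⟨f, g, hf, hg, h0, hg0, rfl⟩

theorem exists_good (n : ℕ) (x : Amb k0 r) (hx : x ∈ Kfld k0 r n) (p : PowerSeries (Amb k0 r))
    (hp : psi k0 r (vY r) x = HahnSeries.ofPowerSeries ℤ _ p) :
    ∃ f g : (Amb k0 r)[X], (∀ i, f.coeff i ∈ Ffld k0 r n) ∧ (∀ i, g.coeff i ∈ Ffld k0 r n) ∧
      g.eval (ambY k0 r) ≠ 0 ∧ g.coeff 0 ≠ 0 ∧ x = f.eval (ambY k0 r) / g.eval (ambY k0 r) ∧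
      f.coeff 0 = PowerSeries.constantCoeff p * g.coeff 0 := by
  obtain ⟨f, g, hf, hg, h0, rfl⟩ := mem_fieldClosure (Ffld k0 r n) (ambY k0 r) x hx
  obtain ⟨f', g', hf', hg', h0', hg0, e⟩ := good_fraction k0 r n _ f g rfl hf hg h0 p hp
  refine ⟨f', g', hf', hg', h0', hg0, e, ?_⟩
  rw [e] at hp
  have := congrArg (PowerSeries.constantCoeff) (series_eq k0 r n f' g' hf' hg' h0' p hp)
  simpa using this

theorem const_mem (n : ℕ) (x : Amb k0 r) (hx : x ∈ Kfld k0 r n) (p : PowerSeries (Amb k0 r))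
    (hp : psi k0 r (vY r) x = HahnSeries.ofPowerSeries ℤ _ p) :
    PowerSeries.constantCoeff p ∈ Ffld k0 r n := by
  obtain ⟨f, g, hf, hg, _, h0, _, e⟩ := exists_good k0 r n x hx p hp
  rw [(eq_div_iff h0).2 e.symm]
  exact (Ffld k0 r n).div_mem (hf 0) (hg 0)

/-- The ring `Aₙ` described by power series expansions. -/
def Asub (n : ℕ) : Subring (Amb k0 r) where
  carrier := {x | x ∈ Kfld k0 r n ∧ ∃ p : PowerSeries (Amb k0 r),
    psi k0 r (vY r) x = HahnSeries.ofPowerSeries ℤ _ p ∧ PowerSeries.constantCoeff p ∈ kfld k0 r n}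
  zero_mem' := ⟨Subfield.zero_mem _, 0, by simp, by simpa using Subfield.zero_mem _⟩
  one_mem' := ⟨Subfield.one_mem _, 1, by simp, by simpa using Subfield.one_mem _⟩
  add_mem' := by
    rintro x y ⟨hx, p, hp, hp'⟩ ⟨hy, q, hq, hq'⟩
    exact ⟨Subfield.add_mem _ hx hy, p + q, by rw [map_add, map_add, hp, hq],
      by rw [map_add]; exact Subfield.add_mem _ hp' hq'⟩
  mul_mem' := by
    rintro x y ⟨hx, p, hp, hp'⟩ ⟨hy, q, hq, hq'⟩
    exact ⟨Subfield.mul_mem _ hx hy, p * q, by rw [map_mul, map_mul, hp, hq],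
      by rw [map_mul]; exact Subfield.mul_mem _ hp' hq'⟩
  neg_mem' := by
    rintro x ⟨hx, p, hp, hp'⟩
    exact ⟨Subfield.neg_mem _ hx, -p, by rw [map_neg, map_neg, hp],
      by rw [map_neg]; exact Subfield.neg_mem _ hp'⟩

theorem mem_Asub {n : ℕ} {x : Amb k0 r} : x ∈ Asub k0 r n ↔ x ∈ Kfld k0 r n ∧
    ∃ p : PowerSeries (Amb k0 r), psi k0 r (vY r) x = HahnSeries.ofPowerSeries ℤ _ p ∧
      PowerSeries.constantCoeff p ∈ kfld k0 r n := Iff.rfl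

theorem mem_polyRing {n : ℕ} {x : Amb k0 r} : x ∈ polyRing k0 r n ↔
    ∃ f : (Amb k0 r)[X], (∀ i, f.coeff i ∈ Ffld k0 r n) ∧ x = f.eval (ambY k0 r) :=
  mem_ringClosure_iff _ _ _

theorem polyRing_le (n : ℕ) : polyRing k0 r n ≤ (Kfld k0 r n).toSubring :=
  Subring.closure_le.2 (fun _ hx => Subfield.subset_closure hx)

theorem Aset_eq (n : ℕ) : Aset k0 r n = (Asub k0 r n : Set (Amb k0 r)) := by
  ext x
  constructor
  · rintro ⟨c, hc, _, ⟨_, ⟨f', hf', g', hg', hd, rfl⟩, rfl⟩, rfl⟩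
    have hcK : c ∈ Kfld k0 r n := Ffld_le_Kfld k0 r n (kfld_le_Ffld k0 r n hc)
    have hK : c + ambY k0 r * (f' / g') ∈ Kfld k0 r n :=
      Subfield.add_mem _ hcK (Subfield.mul_mem _ (ambY_mem k0 r n)
        (Subfield.div_mem _ (polyRing_le k0 r n hf') (polyRing_le k0 r n hg')))
    obtain ⟨f, hf, rfl⟩ := (mem_polyRing k0 r).1 hf'
    obtain ⟨g, hg, rfl⟩ := (mem_polyRing k0 r).1 hg'
    have hg0 : g.coeff 0 ≠ 0 := by
      intro h
      exact hd ⟨g.divX.eval (ambY k0 r), (mem_polyRing k0 r).2 ⟨_, coeff_divX_mem _ hg, rfl⟩,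
        eval_of_coeff_zero h _⟩
    have hg1 : PowerSeries.constantCoeff (g : PowerSeries (Amb k0 r)) ≠ 0 := by simpa using hg0
    refine ⟨hK, PowerSeries.C c + PowerSeries.X * ((f : PowerSeries (Amb k0 r)) * (g : PowerSeries (Amb k0 r))⁻¹), ?_, ?_⟩
    · have hj : HahnSeries.ofPowerSeries ℤ (Amb k0 r) ((g : PowerSeries (Amb k0 r))⁻¹) =
          (HahnSeries.ofPowerSeries ℤ (Amb k0 r) (g : PowerSeries (Amb k0 r)))⁻¹ := by
        apply eq_inv_of_mul_eq_one_left
        rw [← map_mul, PowerSeries.inv_mul_cancel _ hg1, map_one]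
      have hY : psi k0 r (vY r) (ambY k0 r) = HahnSeries.ofPowerSeries ℤ (Amb k0 r) PowerSeries.X := by
        have := psi_var_self k0 r (vY r)
        rw [jmap_apply, Polynomial.coe_X] at this
        exact this
      have hC : psi k0 r (vY r) c = HahnSeries.C c :=
        Ffld_le_constY k0 r n (kfld_le_Ffld k0 r n hc)
      rw [map_add, map_mul, map_div₀, map_add, map_mul, map_mul, hj, psiY_eval k0 r n f hf,
        psiY_eval k0 r n g hg, hY, hC, HahnSeries.ofPowerSeries_C, div_eq_mul_inv]
    · simpa using hc
  · rintro ⟨hK, p, hp, hc⟩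
    obtain ⟨f, g, hf, hg, h1, h0, e, e0⟩ := exists_good k0 r n x hK p hp
    set c := PowerSeries.constantCoeff p with hcdef
    have hcF : c ∈ Ffld k0 r n := kfld_le_Ffld k0 r n hc
    set h := f + -(C c * g) with hh
    have hhF : ∀ i, h.coeff i ∈ Ffld k0 r n :=
      coeff_add_mem (Ffld k0 r n).toSubring hf (coeff_neg_mem (Ffld k0 r n).toSubring
        (coeff_mul_mem (Ffld k0 r n).toSubring (coeff_C_mem (Ffld k0 r n).toSubring hcF) hg))
    have hh0 : h.coeff 0 = 0 := by
      rw [hh, coeff_add, coeff_neg, coeff_C_mul, e0]; ring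
    have eh := eval_of_coeff_zero hh0 (ambY k0 r)
    refine ⟨c, hc, _, ⟨h.divX.eval (ambY k0 r) / g.eval (ambY k0 r),
      ⟨_, (mem_polyRing k0 r).2 ⟨_, coeff_divX_mem _ hhF, rfl⟩, _,
        (mem_polyRing k0 r).2 ⟨g, hg, rfl⟩, ?_, rfl⟩, rfl⟩, ?_⟩
    · rintro ⟨q, hq, hq'⟩
      obtain ⟨q, hqF, rfl⟩ := (mem_polyRing k0 r).1 hq
      have : g + -(X * q) = 0 := by
        apply TrOver_Y k0 r n
        · exact coeff_add_mem (Ffld k0 r n).toSubring hg (coeff_neg_mem (Ffld k0 r n).toSubring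
            (coeff_mul_mem (Ffld k0 r n).toSubring (coeff_X_mem (Ffld k0 r n).toSubring) hqF))
        · simp [hq']
      have := congrArg (fun q => q.coeff 0) this
      simp at this
      exact h0 this
    · rw [← mul_div_assoc, ← eh, hh, e]
      simp only [eval_add, eval_neg, eval_mul, eval_C]
      field_simp
      ring

theorem Aset_inter (n : ℕ) :
    Aset k0 r n = Aset k0 r (n + 1) ∩ (Kfld k0 r n : Set (Amb k0 r)) := by
  rw [Aset_eq, Aset_eq]
  ext x
  constructor
  · rintro ⟨hx, p, hp, hc⟩
    exact ⟨⟨Kfld_mono k0 r n.le_succ hx, p, hp, kfld_mono k0 r n.le_succ hc⟩, hx⟩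
  · rintro ⟨⟨_, p, hp, hc⟩, hx⟩
    exact ⟨hx, p, hp, kfld_inter k0 r n _ (const_mem k0 r n x hx p hp) hc⟩

/-- The integrality step in a power series ring, with constant coefficients. -/
theorem integral_step {A : Type} [Field A] (φ : A →+* LaurentSeries A) (k : Subfield A)
    (S : Subring A) (hS : ∀ x ∈ S, ∃ p : PowerSeries A,
      φ x = HahnSeries.ofPowerSeries ℤ _ p ∧ PowerSeries.constantCoeff p ∈ k)
    (x : A) (hx : IsIntegral S x) : ∃ p : PowerSeries A, φ x = HahnSeries.ofPowerSeries ℤ _ p ∧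
      IsAlgebraic k (PowerSeries.constantCoeff p) := by
  obtain ⟨q, hq, h0⟩ := hx
  choose! e he hek using hS
  have he' : ∀ s : S, φ s = HahnSeries.ofPowerSeries ℤ _ (e s) := fun s => he s s.2
  -- the ring hom to power series
  let E : S →+* PowerSeries A :=
    { toFun := fun s => e s
      map_one' := HahnSeries.ofPowerSeries_injective (Γ := ℤ) (by rw [← he']; simp)
      map_zero' := HahnSeries.ofPowerSeries_injective (Γ := ℤ) (by rw [← he']; simp)
      map_add' := fun a b => HahnSeries.ofPowerSeries_injective (Γ := ℤ)
        (by rw [← he', map_add, ← he', ← he']; simp)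
      map_mul' := fun a b => HahnSeries.ofPowerSeries_injective (Γ := ℤ)
        (by rw [← he', map_mul, ← he', ← he']; simp) }
  have hE : φ.comp (algebraMap S A) = (HahnSeries.ofPowerSeries ℤ A).comp E :=
    RingHom.ext he'
  have h1 : eval₂ ((HahnSeries.ofPowerSeries ℤ A).comp E) (φ x) q = 0 := by
    rw [← hE, ← hom_eval₂, h0, map_zero]
  have h2 : IsIntegral (PowerSeries A) (φ x) := by
    refine ⟨q.map E, hq.map E, ?_⟩
    rw [eval₂_map]; exact h1
  obtain ⟨p, hp⟩ := (IsIntegrallyClosed.isIntegral_iff (R := PowerSeries A) (K := LaurentSeries A)).1 h2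
  have hp' : φ x = HahnSeries.ofPowerSeries ℤ _ p := hp.symm
  refine ⟨p, hp', ?_⟩
  have h3 : eval₂ E p q = 0 := by
    apply HahnSeries.ofPowerSeries_injective (Γ := ℤ)
    rw [hom_eval₂, ← hp', h1, map_zero]
  let E0 : S →+* k := (PowerSeries.constantCoeff.comp E).codRestrict k (fun s => hek s s.2)
  have hE0 : (algebraMap k A).comp E0 = PowerSeries.constantCoeff.comp E := by
    ext s; rfl
  apply IsIntegral.isAlgebraic
  refine ⟨q.map E0, hq.map E0, ?_⟩
  rw [eval₂_map, hE0, ← hom_eval₂, h3, map_zero]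

theorem Asub_closed (n : ℕ) (x : Amb k0 r) (hx : x ∈ Kfld k0 r n)
    (hi : IsIntegral (Asub k0 r n) x) : x ∈ Asub k0 r n := by
  obtain ⟨p, hp, ha⟩ := integral_step (psi k0 r (vY r)) (kfld k0 r n) (Asub k0 r n)
    (fun x hx => hx.2) x hi
  exact ⟨hx, p, hp, kfld_algClosed k0 r n _ (const_mem k0 r n x hx p hp) ha⟩

end PartA

noncomputable section Nagata

open Polynomial

theorem contentIdeal_iff {A : Type} [Field A] (W : Subring A) (q : (↥W)[X]) :
    (∃ (t : Finset ℕ) (u : ℕ → A), (∀ i ∈ t, u i ∈ W) ∧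
      ∑ i ∈ t, u i * (q.map W.subtype).coeff i = 1) ↔ q.contentIdeal = ⊤ := by
  rw [Ideal.eq_top_iff_one]
  constructor
  · rintro ⟨t, u, hu, h⟩
    classical
    let u' : ℕ → W := fun i => if h : i ∈ t then ⟨u i, hu i h⟩ else 0
    have : (1 : W) = ∑ i ∈ t, u' i * q.coeff i := by
      apply Subtype.ext
      rw [← W.coe_subtype, map_sum, map_one, ← h]
      refine Finset.sum_congr rfl fun i hi => ?_
      simp [u', hi]
    rw [this]
    exact Ideal.sum_mem _ fun i _ => Ideal.mul_mem_left _ _ (q.coeff_mem_contentIdeal i)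
  · intro h
    have h' : (1 : W) ∈ Submodule.span W (Set.range q.coeff) := by
      refine (Ideal.span_mono ?_ : q.contentIdeal ≤ Ideal.span (Set.range q.coeff)) h
      intro c hc
      obtain ⟨i, _, rfl⟩ := mem_coeffs_iff.1 (Finset.mem_coe.1 hc)
      exact ⟨i, rfl⟩
    obtain ⟨c, hc⟩ := Finsupp.mem_span_range_iff_exists_finsupp.1 h'
    refine ⟨c.support, fun i => c i, fun i _ => (c i).2, ?_⟩
    have := congrArg W.subtype hc
    rw [Finsupp.sum, map_sum, map_one] at this
    rw [← this]
    refine Finset.sum_congr rfl fun i hi => ?_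
    simp

variable (k0 : Type) [Field k0] (r : ℕ)

theorem unitContent_mul (W : Subring (Amb k0 r)) {f g : (Amb k0 r)[X]}
    (hf : ∀ i, f.coeff i ∈ W) (hg : ∀ i, g.coeff i ∈ W)
    (hf' : unitContent k0 r W f) (hg' : unitContent k0 r W g) : unitContent k0 r W (f * g) := by
  obtain ⟨p, rfl⟩ := coeff_lift W f hf
  obtain ⟨q, rfl⟩ := coeff_lift W g hg
  rw [← Polynomial.map_mul]
  exact (contentIdeal_iff W (p * q)).2 (contentIdeal_mul_eq_top_of_contentIdeal_eq_top
    ((contentIdeal_iff W p).1 hf') ((contentIdeal_iff W q).1 hg'))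

theorem unitContent_of_coeff (W : Subring (Amb k0 r)) {f : (Amb k0 r)[X]} (i : ℕ)
    (h : f.coeff i = 1) : unitContent k0 r W f :=
  ⟨{i}, fun _ => 1, fun _ _ => W.one_mem, by simp [h]⟩

theorem unitContent_one (W : Subring (Amb k0 r)) : unitContent k0 r W (C 1) :=
  unitContent_of_coeff k0 r W 0 (by simp)

theorem unitContent_eval_ne (W : Subring (Amb k0 r)) (T : Amb k0 r)
    (ht : TrOver (W : Set (Amb k0 r)) T) {g : (Amb k0 r)[X]} (hg : ∀ i, g.coeff i ∈ W)
    (hg' : unitContent k0 r W g) : g.eval T ≠ 0 := by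
  intro h
  have := ht g hg h
  obtain ⟨t, u, _, h1⟩ := hg'
  simp [this] at h1

/-- The Nagata ring as a subring. -/
def nagSub (W : Subring (Amb k0 r)) (T : Amb k0 r) (ht : TrOver (W : Set (Amb k0 r)) T) :
    Subring (Amb k0 r) where
  carrier := nagataSet k0 r W T
  zero_mem' := ⟨0, C 1, by simp [W.zero_mem], coeff_C_mem W W.one_mem, unitContent_one k0 r W, by simp⟩
  one_mem' := ⟨C 1, C 1, coeff_C_mem W W.one_mem, coeff_C_mem W W.one_mem,
    unitContent_one k0 r W, by simp⟩
  add_mem' := by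
    rintro _ _ ⟨f, g, hf, hg, hu, rfl⟩ ⟨f', g', hf', hg', hu', rfl⟩
    have h1 := unitContent_eval_ne k0 r W T ht hg hu
    have h2 := unitContent_eval_ne k0 r W T ht hg' hu'
    refine ⟨f * g' + f' * g, g * g', coeff_add_mem W (coeff_mul_mem W hf hg')
      (coeff_mul_mem W hf' hg), coeff_mul_mem W hg hg', unitContent_mul k0 r W hg hg' hu hu', ?_⟩
    simp only [eval_add, eval_mul]
    field_simp
  mul_mem' := by
    rintro _ _ ⟨f, g, hf, hg, hu, rfl⟩ ⟨f', g', hf', hg', hu', rfl⟩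
    refine ⟨f * f', g * g', coeff_mul_mem W hf hf', coeff_mul_mem W hg hg',
      unitContent_mul k0 r W hg hg' hu hu', ?_⟩
    simp only [eval_mul]
    rw [div_mul_div_comm]
  neg_mem' := by
    rintro _ ⟨f, g, hf, hg, hu, rfl⟩
    exact ⟨-f, g, coeff_neg_mem W hf, hg, hu, by simp [neg_div]⟩

theorem coe_nagSub (W : Subring (Amb k0 r)) (T : Amb k0 r) (ht) :
    (nagSub k0 r W T ht : Set (Amb k0 r)) = nagataSet k0 r W T := rfl

theorem subset_nagata (W : Subring (Amb k0 r)) (T x : Amb k0 r) (hx : x ∈ W) :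
    x ∈ nagataSet k0 r W T :=
  ⟨C x, C 1, coeff_C_mem W hx, coeff_C_mem W W.one_mem, unitContent_one k0 r W, by simp⟩

theorem nagata_inter (L : Subfield (Amb k0 r)) (W : Subring (Amb k0 r))
    (hWL : (W : Set (Amb k0 r)) ⊆ L) (T x : Amb k0 r) (ht : TrOver (L : Set (Amb k0 r)) T)
    (hx : x ∈ nagataSet k0 r W T) (hxL : x ∈ L) : x ∈ W := by
  obtain ⟨f, g, hf, hg, hu, e⟩ := hx
  have h0 := unitContent_eval_ne k0 r W T (ht.mono hWL) hg hu
  have h1 : C x * g + -f = 0 := by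
    apply ht
    · exact coeff_add_mem L.toSubring (coeff_mul_mem L.toSubring (coeff_C_mem L.toSubring hxL)
        (fun i => hWL (hg i))) (coeff_neg_mem L.toSubring (fun i => hWL (hf i)))
    · simp only [eval_add, eval_mul, eval_C, eval_neg]
      rw [e, div_mul_cancel₀ _ h0, add_neg_cancel]
  obtain ⟨t, u, hu, h2⟩ := hu
  have h3 : x = ∑ i ∈ t, u i * f.coeff i := by
    have : ∀ i, f.coeff i = x * g.coeff i := by
      intro i
      have := congrArg (fun q => q.coeff i) h1
      simp only [coeff_add, coeff_C_mul, coeff_neg, coeff_zero] at this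
      linear_combination -this
    calc x = x * ∑ i ∈ t, u i * g.coeff i := by rw [h2, mul_one]
      _ = _ := by
        rw [Finset.mul_sum]
        refine Finset.sum_congr rfl fun i _ => ?_
        rw [this]; ring
  rw [h3]
  exact W.sum_mem fun i hi => W.mul_mem (hu i hi) (hf i)

theorem scaled_mem (W : Subring (Amb k0 r)) (a : Amb k0 r) (T : Amb k0 r) (f g : (Amb k0 r)[X])
    (ha : a ≠ 0) (hf : ∀ i, f.coeff i / a ∈ W) (hg : ∀ i, g.coeff i / a ∈ W) (i : ℕ)
    (hi : g.coeff i = a) : f.eval T / g.eval T ∈ nagataSet k0 r W T := by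
  refine ⟨C a⁻¹ * f, C a⁻¹ * g, ?_, ?_, unitContent_of_coeff k0 r W i ?_, ?_⟩
  · intro i; rw [coeff_C_mul, mul_comm, ← div_eq_mul_inv]; exact hf i
  · intro i; rw [coeff_C_mul, mul_comm, ← div_eq_mul_inv]; exact hg i
  · rw [coeff_C_mul, hi, inv_mul_cancel₀ ha]
  · simp only [eval_mul, eval_C]
    rw [mul_div_mul_left _ _ (inv_ne_zero ha)]

theorem nagata_valuation (L : Subfield (Amb k0 r)) (W : Subring (Amb k0 r))
    (hv : ∀ x ∈ L, x ∈ W ∨ x⁻¹ ∈ W) (T x : Amb k0 r)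
    (hx : x ∈ Subfield.closure ((L : Set (Amb k0 r)) ∪ {T})) :
    x ∈ nagataSet k0 r W T ∨ x⁻¹ ∈ nagataSet k0 r W T := by
  classical
  obtain ⟨f, g, hf, hg, h0, rfl⟩ := mem_fieldClosure L T x hx
  have hg0 : g ≠ 0 := by rintro rfl; simp at h0
  let s : Finset (Amb k0 r) := f.coeffs ∪ g.coeffs
  have hs : ∀ a ∈ s, a ∈ L := by
    intro a ha
    rcases Finset.mem_union.1 ha with h | h
    · obtain ⟨i, _, rfl⟩ := mem_coeffs_iff.1 h; exact hf i
    · obtain ⟨i, _, rfl⟩ := mem_coeffs_iff.1 h; exact hg i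
  have hn : ∃ a ∈ s, a ≠ 0 :=
    ⟨g.leadingCoeff, Finset.mem_union_right _
      (mem_coeffs_iff.2 ⟨g.natDegree, natDegree_mem_support_of_nonzero hg0, rfl⟩),
      leadingCoeff_ne_zero.2 hg0⟩
  obtain ⟨a, ha, ha0, hb⟩ := exists_max L W hv s hs hn
  have hf' : ∀ i, f.coeff i / a ∈ W := by
    intro i
    by_cases h : f.coeff i = 0
    · rw [h, zero_div]; exact W.zero_mem
    · exact hb _ (Finset.mem_union_left _ (coeff_mem_coeffs h))
  have hg' : ∀ i, g.coeff i / a ∈ W := by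
    intro i
    by_cases h : g.coeff i = 0
    · rw [h, zero_div]; exact W.zero_mem
    · exact hb _ (Finset.mem_union_right _ (coeff_mem_coeffs h))
  rcases Finset.mem_union.1 ha with h | h
  · obtain ⟨i, _, e⟩ := mem_coeffs_iff.1 h
    right
    rw [inv_div]
    exact scaled_mem k0 r W a T g f ha0 hg' hf' i e.symm
  · obtain ⟨i, _, e⟩ := mem_coeffs_iff.1 h
    left
    exact scaled_mem k0 r W a T f g ha0 hf' hg' i e.symm

theorem nagata_closed (L : Subfield (Amb k0 r)) (W : Subring (Amb k0 r))
    (hWL : (W : Set (Amb k0 r)) ⊆ L) (hv : ∀ x ∈ L, x ∈ W ∨ x⁻¹ ∈ W) (T x : Amb k0 r)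
    (ht : TrOver (L : Set (Amb k0 r)) T)
    (hx : x ∈ Subfield.closure ((L : Set (Amb k0 r)) ∪ {T}))
    (D : Set (Amb k0 r)) (hD : D ⊆ nagataSet k0 r W T) (hi : IsIntegral (Subring.closure D) x) :
    x ∈ nagataSet k0 r W T := by
  rcases nagata_valuation k0 r L W hv T x hx with h | h
  · exact h
  · have hle : Subring.closure D ≤ nagSub k0 r W T (ht.mono hWL) := Subring.closure_le.2 hD
    exact mem_of_isIntegral_of_inv (nagSub k0 r W T (ht.mono hWL)) x
      (isIntegral_subring_mono hle hi) h

theorem Dset_sub (n : ℕ) : Dset k0 r (n + 1) ⊆ Aset k0 r (n + 1) := by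
  cases n with
  | zero => exact subset_rfl
  | succ n => exact Set.inter_subset_right

theorem Dset_closed (n : ℕ) (x : Amb k0 r) (hx : x ∈ Kfld k0 r (n + 1))
    (hi : IsIntegral (Subring.closure (Dset k0 r (n + 1))) x) : x ∈ Dset k0 r (n + 1) := by
  have hA : x ∈ Aset k0 r (n + 1) := by
    rw [Aset_eq]
    refine Asub_closed k0 r (n + 1) x hx (isIntegral_subring_mono (Subring.closure_le.2 ?_) hi)
    rw [← Aset_eq]
    exact Dset_sub k0 r n
  cases n with
  | zero => exact hA
  | succ n =>
    refine ⟨Set.mem_iInter₂.2 fun W hW => ?_, hA⟩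
    obtain ⟨_, hWL, hv⟩ := id hW
    refine nagata_closed k0 r (Kfld k0 r (n + 1)) W hWL hv _ x (TrOver_X' k0 r (n + 1))
      (Kfld_succ k0 r (n + 1) hx) _ ?_ hi
    intro y hy
    exact Set.mem_iInter₂.1 hy.1 W hW

theorem mem_integral_of_valuations {A : Type} [Field A] (D : Set A) (x : A)
    (h : ∀ V : ValuationSubring A, D ⊆ V → x ∈ V) : IsIntegral (Subring.closure D) x := by
  have : x ∈ (integralClosure (Subring.closure D) A).toSubring := by
    rw [← iInf_valuationSubring_superset, Subring.mem_iInf]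
    exact fun V => h V.1 V.2
  exact this

theorem Bset_inter (n : ℕ) :
    Bset k0 r (n + 2) ∩ (Kfld k0 r (n + 1) : Set (Amb k0 r)) = Dset k0 r (n + 1) := by
  ext x
  constructor
  · rintro ⟨hB, hK⟩
    refine Dset_closed k0 r n x hK (mem_integral_of_valuations _ x fun V hV => ?_)
    let W : Subring (Amb k0 r) := V.toSubring ⊓ (Kfld k0 r (n + 1)).toSubring
    have hDK : Dset k0 r (n + 1) ⊆ (Kfld k0 r (n + 1) : Set (Amb k0 r)) := fun y hy => by
      have := Dset_sub k0 r n hy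
      rw [Aset_eq] at this
      exact this.1
    have hWL : (W : Set (Amb k0 r)) ⊆ (Kfld k0 r (n + 1) : Set (Amb k0 r)) := fun y hy => hy.2
    have hW : W ∈ valOverringsIn k0 r (Dset k0 r (n + 1)) (Kfld k0 r (n + 1)) := by
      refine ⟨fun y hy => ⟨hV hy, hDK hy⟩, hWL, fun y hy => ?_⟩
      rcases V.mem_or_inv_mem y with h | h
      · exact Or.inl ⟨h, hy⟩
      · exact Or.inr ⟨h, Subfield.inv_mem _ hy⟩
    exact (nagata_inter k0 r (Kfld k0 r (n + 1)) W hWL _ x (TrOver_X' k0 r (n + 1))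
      (Set.mem_iInter₂.1 hB W hW) hK).1
  · intro hx
    refine ⟨Set.mem_iInter₂.2 fun W hW => subset_nagata k0 r W _ x (hW.1 hx), ?_⟩
    have := Dset_sub k0 r n hx
    rw [Aset_eq] at this
    exact this.1

end Nagata

/-- In the tower construction, for every `n ≥ 2`:
`Bₙ ∩ K_{n-1} = D_{n-1} ⊆ A_{n-1} = Aₙ ∩ K_{n-1}` and `Dₙ ∩ K_{n-1} = D_{n-1}`
(all intersections taken inside the ambient field). -/
theorem tower_contractions_to_previous_level
    (k0 : Type) [Field k0] (r : ℕ) (hr : 2 ≤ r) (n : ℕ) (hn : 2 ≤ n) :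
    Bset k0 r n ∩ (Kfld k0 r (n - 1) : Set (Amb k0 r)) = Dset k0 r (n - 1) ∧
    Dset k0 r (n - 1) ⊆ Aset k0 r (n - 1) ∧
    Aset k0 r (n - 1) = Aset k0 r n ∩ (Kfld k0 r (n - 1) : Set (Amb k0 r)) ∧
    Dset k0 r n ∩ (Kfld k0 r (n - 1) : Set (Amb k0 r)) = Dset k0 r (n - 1) := by
  obtain ⟨m, rfl⟩ : ∃ m, n = m + 2 := ⟨n - 2, by omega⟩
  have hB := Bset_inter k0 r m
  have hA := Aset_inter k0 r (m + 1)
  have hD := Dset_sub k0 r m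
  refine ⟨hB, hD, hA, ?_⟩
  change (Bset k0 r (m + 2) ∩ Aset k0 r (m + 2)) ∩ (Kfld k0 r (m + 1) : Set (Amb k0 r)) =
    Dset k0 r (m + 1)
  rw [Set.inter_right_comm, hB]
  refine Set.inter_eq_left.2 (hD.trans ?_)
  rw [hA]
  exact Set.inter_subset_left
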